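/- Let a, b, ℓ_1, ℓ_2 be positive integers with b ≥ a and ℓ_1·2^b > ℓ_2·2^a, and let m_2 = ⌊ℓ_1·2^{b−a}/3⌋ and k_2 = ⌊ℓ_2/3⌋ (note z(2) = 3). If a ≡ b (mod 2), then ν_2( C(ℓ_1 2^b, ℓ_2 2^a)_F ) equals: ν_2(binomial(m_2,k_2)) if ℓ_1 ≡ ℓ_2 (mod 3) or ℓ_2 ≡ 0 (mod 3); a + 2 + ν_2(m_2 − k_2) + ν_2(binomial(m_2,k_2)) if ℓ_1 ≡ 0 (mod 3) and ℓ_2 ≢ 0 (mod 3); ⌈a/2⌉ + 1 + ν_2(m_2 − k_2) + ν_2(binomial(m_2,k_2)) if ℓ_1 ≡ 1 and ℓ_2 ≡ 2 (mod 3); and ⌈(a+1)/2⌉ + ν_2(binomial(m_2,k_2)) if ℓ_1 ≡ 2 and ℓ_2 ≡ 1 (mod 3). If a ≢ b (mod 2), then ν_2( C(ℓ_1 2^b, ℓ_2 2^a)_F ) equals: ν_2(binomial(m_2,k_2)) if ℓ_1 ≡ −ℓ_2 (mod 3) or ℓ_2 ≡ 0 (mod 3); a + 2 + ν_2(m_2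 − k_2) + ν_2(binomial(m_2,k_2)) if ℓ_1 ≡ 0 (mod 3) and ℓ_2 ≢ 0 (mod 3); ⌈(a+1)/2⌉ + ν_2(binomial(m_2,k_2)) if ℓ_1 ≡ 1 and ℓ_2 ≡ 1 (mod 3); and ⌈a/2⌉ + 1 + ν_2(m_2 − k_2) + ν_2(binomial(m_2,k_2)) if ℓ_1 ≡ 2 and ℓ_2 ≡ 2 (mod 3). -/

import Mathlib

/-!
Write `n!_F = F_1 ⋯ F_n`. The Fibonomial coefficient is `m!_F / (k!_F (m-k)!_F)`, the division being
exact by `F_{m+n+2} = F_{m+1} F_n + F_{m+2} F_{n+1}`, so everything reduces to `ν₂(n!_F)`.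

Since `ν₂(F_n)` is `0` when `3 ∤ n`, `1` when `n ≡ 3 (mod 6)` and `ν₂(n) + 2` when `6 ∣ n`
(`padicValNat_fib_three_mul`, from the doubling formula and the period `12` of the sequence mod `8`),
one gets `ν₂(n!_F) = q + ⌊q/2⌋ + ν₂(q!)` with `q = ⌊n/3⌋` (`padicValNat_fibFact`).
For `n = x·2^a` the identity `ν₂(q!) = ⌊q/2⌋ + ν₂(⌊q/2⌋!)`, applied `a` times, writes this as
`ν₂(⌊x/3⌋!)`, plus `⌊x/3⌋` times a constant depending only on `a`, plus a correction `fibCorr (x % 3) a`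
(`padicValNat_fibFact_mul_two_pow`). Subtracting the contributions of `k` and `n - k` from that of `n`,
only these corrections and a possible borrow in `⌊(n-k)/3⌋` survive; the borrow is what produces
`ν₂(m₂ - k₂)`. Both are evaluated by summing the residues of `2^i` and `2^{i+1}` mod `3`.
-/

/-- The Fibonomial coefficient `C(m,k)_F = (F_{m-k+1} ⋯ F_m)/(F_1 ⋯ F_k)`,
with `C(m,0)_F = 1` and `C(m,k)_F = 0` for `k > m`. -/
def fibBinom (m k : ℕ) : ℕ :=
  (∏ i ∈ Finset.range k, Nat.fib (m - i)) / ∏ i ∈ Finset.range k, Nat.fib (i + 1)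

/-- The rank of appearance `z(n)`: the least positive `m` with `n ∣ F_m`. -/
noncomputable def fibRank (n : ℕ) : ℕ := sInf {m : ℕ | 0 < m ∧ n ∣ Nat.fib m}

/-- The sum of the digits of `n` in base `q`. -/
def digitSum (q n : ℕ) : ℕ := (Nat.digits q n).sum

open Finset

/-! ### Fibonacci factorials and integrality -/

/-- The Fibonacci factorial `n!_F = F_1 ⋯ F_n`. -/
def fibFact (n : ℕ) : ℕ := ∏ i ∈ range n, Nat.fib (i + 1)

theorem fibFact_succ (n : ℕ) : fibFact (n + 1) = fibFact n * Nat.fib (n + 1) :=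
  prod_range_succ _ _

theorem fibFact_ne_zero (n : ℕ) : fibFact n ≠ 0 :=
  prod_ne_zero_iff.2 fun i _ => (Nat.fib_pos.2 i.succ_pos).ne'

/-- Integrality of the Fibonomial coefficients. -/
theorem fibFact_mul_dvd (m n : ℕ) : fibFact m * fibFact n ∣ fibFact (m + n) := by
  induction m generalizing n with
  | zero => simp [fibFact]
  | succ m ihm =>
    induction n with
    | zero => simp [fibFact]
    | succ n ihn =>
      have h : Nat.fib (m + 1 + n + 1)
          = Nat.fib (m + 1) * Nat.fib n + Nat.fib (m + 2) * Nat.fib (n + 1) :=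
        Nat.fib_add (m + 1) n
      rw [← add_assoc, fibFact_succ (m + 1 + n), h, mul_add]
      apply dvd_add
      · have h1 := mul_dvd_mul_right (ihm (n + 1)) (Nat.fib (m + 1))
        rw [show m + (n + 1) = m + 1 + n by ring] at h1
        rw [fibFact_succ m]
        calc _ = fibFact m * fibFact (n + 1) * Nat.fib (m + 1) := by ring
          _ ∣ _ := h1
          _ ∣ _ := ⟨Nat.fib n, by ring⟩
      · rw [fibFact_succ n]
        calc _ = fibFact (m + 1) * fibFact n * Nat.fib (n + 1) := by ring
          _ ∣ _ := mul_dvd_mul_right ihn _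
          _ ∣ _ := ⟨Nat.fib (m + 2), by ring⟩

theorem fibBinom_mul (m k : ℕ) :
    fibBinom (m + k) k * (fibFact k * fibFact m) = fibFact (m + k) := by
  have hprod : ∀ k, (∏ i ∈ range k, Nat.fib (m + k - i)) * fibFact m = fibFact (m + k) := by
    intro k
    induction k with
    | zero => simp
    | succ k ih =>
      rw [prod_range_succ', ← add_assoc, fibFact_succ, ← ih]
      simp only [Nat.add_sub_add_right, Nat.sub_zero]
      ring
  have hpos := Nat.pos_of_ne_zero (fibFact_ne_zero m)
  have hdvd : fibFact k ∣ ∏ i ∈ range k, Nat.fib (m + k - i) := by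
    have := fibFact_mul_dvd k m
    rw [add_comm k m, ← hprod k] at this
    exact Nat.dvd_of_mul_dvd_mul_right hpos this
  rw [← hprod k, ← mul_assoc]
  congr 1
  exact Nat.div_mul_cancel hdvd

theorem padicValNat_fibBinom (m k : ℕ) :
    padicValNat 2 (fibBinom (m + k) k) + (padicValNat 2 (fibFact k) + padicValNat 2 (fibFact m))
      = padicValNat 2 (fibFact (m + k)) := by
  have h := fibBinom_mul m k
  have h0 : fibBinom (m + k) k ≠ 0 := by
    rintro h0
    rw [h0, zero_mul] at h
    exact fibFact_ne_zero _ h.symm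
  rw [← h, padicValNat.mul h0 (mul_ne_zero (fibFact_ne_zero _) (fibFact_ne_zero _)),
    padicValNat.mul (fibFact_ne_zero _) (fibFact_ne_zero _)]

/-! ### The 2-adic valuation of Fibonacci numbers -/

/-- The Fibonacci sequence has period dividing `12` modulo `8`. -/
theorem fib_mod_eight (n : ℕ) : Nat.fib (n + 12) % 8 = Nat.fib n % 8 := by
  have h := Nat.fib_add n 11
  have h1 : Nat.fib 11 = 89 := by decide
  have h2 : Nat.fib 12 = 144 := by decide
  rw [h1, show 11 + 1 = 12 from rfl, h2] at h
  rw [show n + 12 = n + 11 + 1 from rfl, h]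
  omega

theorem fib_mod_eight_mod (k r : ℕ) : Nat.fib (12 * k + r) % 8 = Nat.fib r % 8 := by
  induction k with
  | zero => simp
  | succ k ih => rw [← ih, ← fib_mod_eight (12 * k + r), show 12 * (k + 1) + r = 12 * k + r + 12 by ring]

theorem padicValNat_two_of_mod_two {x : ℕ} (h : x % 2 = 1) : padicValNat 2 x = 0 :=
  padicValNat.eq_zero_of_not_dvd (by omega)

theorem padicValNat_two_mul {x : ℕ} (h : x ≠ 0) : padicValNat 2 (2 * x) = padicValNat 2 x + 1 := by
  rw [padicValNat.mul two_ne_zero h, padicValNat_self, add_comm]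

theorem padicValNat_two_of_mod_four {x : ℕ} (h : x % 4 = 2) : padicValNat 2 x = 1 := by
  obtain ⟨y, rfl⟩ : ∃ y, x = 2 * y := ⟨x / 2, by omega⟩
  rw [padicValNat_two_mul (by omega), padicValNat_two_of_mod_two (by omega)]

theorem padicValNat_two_of_mod_eight {x : ℕ} (h : x % 8 = 4) : padicValNat 2 x = 2 := by
  obtain ⟨y, rfl⟩ : ∃ y, x = 2 * y := ⟨x / 2, by omega⟩
  rw [padicValNat_two_mul (by omega), padicValNat_two_of_mod_four (by omega)]

theorem padicValNat_fib_of_not_dvd {n : ℕ} (h : n % 3 ≠ 0) : padicValNat 2 (Nat.fib n) = 0 := by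
  have hn : n = 12 * (n / 12) + n % 12 := by omega
  have h8 := fib_mod_eight_mod (n / 12) (n % 12)
  rw [← hn] at h8
  apply padicValNat_two_of_mod_two
  have h1 : n % 12 < 12 := Nat.mod_lt _ (by norm_num)
  have h2 : n % 12 % 3 ≠ 0 := by omega
  generalize n % 12 = r at *
  interval_cases r <;> simp [Nat.fib_add_two] at h2 h8 <;> omega

theorem padicValNat_fib_three_mul_odd {j : ℕ} (h : j % 2 = 1) :
    padicValNat 2 (Nat.fib (3 * j)) = 1 := by
  have hn : 3 * j = 12 * (j / 4) + 3 * (j % 4) := by omega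
  have h8 := fib_mod_eight_mod (j / 4) (3 * (j % 4))
  rw [← hn] at h8
  apply padicValNat_two_of_mod_four
  obtain h1 | h1 : j % 4 = 1 ∨ j % 4 = 3 := by omega
  all_goals
    rw [h1] at h8
    norm_num [Nat.fib_add_two] at h8
    omega

/-- The valuation of the Lucas number `L_{3j} = 2 F_{3j+1} - F_{3j}`. -/
theorem padicValNat_lucas (j : ℕ) :
    padicValNat 2 (2 * Nat.fib (3 * j + 1) - Nat.fib (3 * j)) = 1 + j % 2 := by
  have hn : 3 * j = 12 * (j / 4) + 3 * (j % 4) := by omega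
  have h8 := fib_mod_eight_mod (j / 4) (3 * (j % 4))
  have h9 := fib_mod_eight_mod (j / 4) (3 * (j % 4) + 1)
  rw [← add_assoc, ← hn] at h9
  rw [← hn] at h8
  have hle : Nat.fib (3 * j) ≤ Nat.fib (3 * j + 1) := Nat.fib_le_fib_succ
  obtain h1 | h1 | h1 | h1 : j % 4 = 0 ∨ j % 4 = 1 ∨ j % 4 = 2 ∨ j % 4 = 3 := by omega
  all_goals
    rw [h1] at h8 h9
    norm_num [Nat.fib_add_two] at h8 h9
    first
    | rw [show j % 2 = 0 by omega]; exact padicValNat_two_of_mod_four (by omega)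
    | rw [show j % 2 = 1 by omega]; exact padicValNat_two_of_mod_eight (by omega)

theorem padicValNat_fib_six_mul (j : ℕ) (hj : j ≠ 0) :
    padicValNat 2 (Nat.fib (3 * (2 * j))) = 3 + padicValNat 2 j := by
  induction j using Nat.strong_induction_on with
  | _ j ih =>
    have hF : Nat.fib (3 * j) ≠ 0 := (Nat.fib_pos.2 (by omega)).ne'
    have hL : 2 * Nat.fib (3 * j + 1) - Nat.fib (3 * j) ≠ 0 := by
      have : Nat.fib (3 * j) ≤ Nat.fib (3 * j + 1) := Nat.fib_le_fib_succ
      omega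
    rw [show 3 * (2 * j) = 2 * (3 * j) by ring, Nat.fib_two_mul, padicValNat.mul hF hL,
      padicValNat_lucas]
    obtain h | h := Nat.mod_two_eq_zero_or_one j
    · obtain ⟨i, rfl⟩ : ∃ i, j = 2 * i := ⟨j / 2, by omega⟩
      rw [ih i (by omega) (by omega), padicValNat_two_mul (by omega), h]
      ring
    · rw [padicValNat_fib_three_mul_odd h, padicValNat_two_of_mod_two h, h]

/-- `ν₂(F_{3n})` for `n = j + 1`, written as the increment of `n + ⌊n/2⌋ + ν₂(n!)` so that it sums
to the valuation of the Fibonacci factorial. -/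
theorem padicValNat_fib_three_mul (j : ℕ) :
    padicValNat 2 (Nat.fib (3 * (j + 1)))
      = 1 + ((j + 1) / 2 - j / 2) + padicValNat 2 (j + 1) := by
  obtain h | h := Nat.mod_two_eq_zero_or_one (j + 1)
  · obtain ⟨i, hi⟩ : ∃ i, j + 1 = 2 * i := ⟨(j + 1) / 2, by omega⟩
    rw [hi, padicValNat_fib_six_mul i (by omega), padicValNat_two_mul (by omega)]
    omega
  · rw [padicValNat_fib_three_mul_odd h, padicValNat_two_of_mod_two h]
    omega

/-! ### The 2-adic valuation of Fibonacci factorials -/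

theorem padicValNat_fibFact (n : ℕ) :
    padicValNat 2 (fibFact n) = n / 3 + n / 3 / 2 + padicValNat 2 (n / 3).factorial := by
  induction n with
  | zero => simp [fibFact]
  | succ n ih =>
    rw [fibFact_succ, padicValNat.mul (fibFact_ne_zero _) (Nat.fib_pos.2 (by omega)).ne', ih]
    by_cases h : (n + 1) % 3 = 0
    · obtain ⟨j, hj⟩ : ∃ j, n + 1 = 3 * (j + 1) := ⟨n / 3, by omega⟩
      have h1 : n / 3 = j := by omega
      have h2 : (n + 1) / 3 = j + 1 := by omega
      rw [h2, h1, hj, padicValNat_fib_three_mul, Nat.factorial_succ,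
        padicValNat.mul (by omega) (Nat.factorial_ne_zero _)]
      omega
    · rw [padicValNat_fib_of_not_dvd h, show (n + 1) / 3 = n / 3 by omega]
      rfl

theorem padicValNat_factorial_half (q : ℕ) :
    padicValNat 2 q.factorial = q / 2 + padicValNat 2 (q / 2).factorial := by
  rw [← padicValNat_mul_div_factorial, padicValNat_factorial_mul, add_comm]

/-- `∑_{i < a} ⌊r 2^i / 3⌋` (the division is the rounding one on `ℕ`). -/
def floorSum (r a : ℕ) : ℕ := ∑ i ∈ range a, r * 2 ^ i / 3

theorem mul_two_pow_div_three (x i : ℕ) :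
    x * 2 ^ i / 3 = x / 3 * 2 ^ i + x % 3 * 2 ^ i / 3 := by
  conv_lhs => rw [← Nat.div_add_mod x 3]
  rw [add_mul, mul_assoc, Nat.mul_add_div (by norm_num)]

theorem padicValNat_factorial_mul_two_pow (x a : ℕ) :
    padicValNat 2 (x * 2 ^ a / 3).factorial + x / 3
      = x / 3 * 2 ^ a + floorSum (x % 3) a + padicValNat 2 (x / 3).factorial := by
  induction a with
  | zero => simp [floorSum]; ring
  | succ a ih =>
    have h : x * 2 ^ (a + 1) / 3 / 2 = x * 2 ^ a / 3 := by
      rw [Nat.div_div_eq_div_mul, pow_succ, ← mul_assoc, Nat.mul_div_mul_right _ _ (by norm_num)]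
    rw [padicValNat_factorial_half, h]
    have h2 : floorSum (x % 3) (a + 1) = floorSum (x % 3) a + x % 3 * 2 ^ a / 3 :=
      sum_range_succ _ _
    have h3 := mul_two_pow_div_three x a
    rw [h2, pow_succ]
    linarith

/-- The part of `ν₂((x 2^{a+1})!_F)` that depends only on `a` and on the residue `r` of `x`
modulo `3`. -/
def fibCorr (r a : ℕ) : ℕ := r * 2 ^ (a + 1) / 3 + r * 2 ^ a / 3 + floorSum r (a + 1)

theorem padicValNat_fibFact_mul_two_pow (x a : ℕ) :
    padicValNat 2 (fibFact (x * 2 ^ (a + 1))) + x / 3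
      = x / 3 * (5 * 2 ^ a) + fibCorr (x % 3) a + padicValNat 2 (x / 3).factorial := by
  have h : x * 2 ^ (a + 1) / 3 / 2 = x * 2 ^ a / 3 := by
    rw [Nat.div_div_eq_div_mul, pow_succ, ← mul_assoc, Nat.mul_div_mul_right _ _ (by norm_num)]
  have h1 := padicValNat_factorial_mul_two_pow x (a + 1)
  have h2 := mul_two_pow_div_three x a
  have h3 := mul_two_pow_div_three x (a + 1)
  rw [padicValNat_fibFact, h, fibCorr]
  rw [pow_succ] at *
  linarith

/-- Closed forms, which hold because `2^i` alternates between `1` and `2` modulo `3`. -/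
theorem floorSum_closed (a : ℕ) :
    3 * (2 ^ a / 3) + (1 + a % 2) = 2 ^ a ∧ 3 * (2 * 2 ^ a / 3) + (2 - a % 2) = 2 * 2 ^ a ∧
      3 * floorSum 1 a + 1 + a + a / 2 = 2 ^ a ∧
      3 * floorSum 2 a + 2 + a + (a + 1) / 2 = 2 * 2 ^ a := by
  induction a with
  | zero => simp [floorSum]
  | succ a ih =>
    have h1 : floorSum 1 (a + 1) = floorSum 1 a + 1 * 2 ^ a / 3 := sum_range_succ _ _
    have h2 : floorSum 2 (a + 1) = floorSum 2 a + 2 * 2 ^ a / 3 := sum_range_succ _ _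
    rw [h1, h2, pow_succ]
    clear h1 h2
    generalize 2 ^ a = w at *
    generalize floorSum 1 a = s at *
    generalize floorSum 2 a = t at *
    obtain ⟨c, rfl | rfl⟩ : ∃ c, a = 2 * c ∨ a = 2 * c + 1 := ⟨a / 2, by omega⟩
    all_goals
      obtain ⟨i1, i2, i3, i4⟩ := ih
      refine ⟨?_, ?_, ?_, ?_⟩ <;> omega

theorem fibCorr_zero (a : ℕ) : fibCorr 0 a = 0 := by simp [fibCorr, floorSum]

/-- The three combinations of corrections that occur when subtracting residues modulo `3`:
`2 = 1 + 1` without a borrow, `0 + 3 = 1 + 2` and `1 + 3 = 2 + 2` with one. -/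
theorem fibCorr_closed (a : ℕ) :
    fibCorr 2 a = 2 * fibCorr 1 a + (a + 3) / 2 ∧
      fibCorr 1 a + fibCorr 2 a + (a + 4) = 5 * 2 ^ a ∧
      2 * fibCorr 2 a + ((a + 2) / 2 + 2) = 5 * 2 ^ a + fibCorr 1 a := by
  have h := floorSum_closed a
  have h' := floorSum_closed (a + 1)
  simp only [fibCorr, one_mul]
  rw [pow_succ, mul_comm (2 ^ a) 2] at *
  generalize 2 ^ a = w at *
  generalize floorSum 1 (a + 1) = s at *
  generalize floorSum 2 (a + 1) = t at *
  obtain ⟨c, rfl | rfl⟩ : ∃ c, a = 2 * c ∨ a = 2 * c + 1 := ⟨a / 2, by omega⟩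
  all_goals
    obtain ⟨h1, h2, -, -⟩ := h
    obtain ⟨i1, i2, i3, i4⟩ := h'
    refine ⟨?_, ?_, ?_⟩ <;> omega

/-! ### Comparison with the ordinary binomial coefficient -/

theorem padicValNat_choose_two (d k : ℕ) :
    padicValNat 2 ((d + k).choose k) + (padicValNat 2 k.factorial + padicValNat 2 d.factorial)
      = padicValNat 2 (d + k).factorial := by
  have h := Nat.add_choose_mul_factorial_mul_factorial d k
  rw [← h, padicValNat.mul (mul_ne_zero (Nat.choose_pos (by omega)).ne' (Nat.factorial_ne_zero _))
    (Nat.factorial_ne_zero _), padicValNat.mul (Nat.choose_pos (by omega)).ne'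
    (Nat.factorial_ne_zero _)]
  ring

/-- The comparison when `⌊n/3⌋ - ⌊k/3⌋ = ⌊(n-k)/3⌋`. -/
theorem padicValNat_fibBinom_of_le (a n k : ℕ) (hkn : k ≤ n) (h : k % 3 ≤ n % 3) :
    padicValNat 2 (fibBinom (n * 2 ^ (a + 1)) (k * 2 ^ (a + 1)))
        + (fibCorr (k % 3) a + fibCorr (n % 3 - k % 3) a)
      = fibCorr (n % 3) a + padicValNat 2 ((n / 3).choose (k / 3)) := by
  obtain ⟨d, rfl⟩ : ∃ d, n = d + k := ⟨n - k, by omega⟩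
  have hB := padicValNat_fibBinom (d * 2 ^ (a + 1)) (k * 2 ^ (a + 1))
  rw [← add_mul] at hB
  have h1 := padicValNat_fibFact_mul_two_pow (d + k) a
  have h2 := padicValNat_fibFact_mul_two_pow k a
  have h3 := padicValNat_fibFact_mul_two_pow d a
  have hC := padicValNat_choose_two (d / 3) (k / 3)
  have e : (d + k) / 3 = d / 3 + k / 3 := by omega
  have e' : (d + k) % 3 - k % 3 = d % 3 := by omega
  rw [e']
  rw [e, add_mul (d / 3)] at h1
  rw [e]
  omega

/-- The comparison when the subtraction `n - k` borrows at the residue modulo `3`, so that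
`⌊(n-k)/3⌋ = ⌊n/3⌋ - ⌊k/3⌋ - 1`. -/
theorem padicValNat_fibBinom_of_lt (a n k : ℕ) (hkn : k ≤ n) (h : n % 3 < k % 3) :
    padicValNat 2 (fibBinom (n * 2 ^ (a + 1)) (k * 2 ^ (a + 1)))
        + (fibCorr (k % 3) a + fibCorr (n % 3 + 3 - k % 3) a) + 1
      = 5 * 2 ^ a + fibCorr (n % 3) a + padicValNat 2 (n / 3 - k / 3)
        + padicValNat 2 ((n / 3).choose (k / 3)) := by
  obtain ⟨d, rfl⟩ : ∃ d, n = d + k := ⟨n - k, by omega⟩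
  have hB := padicValNat_fibBinom (d * 2 ^ (a + 1)) (k * 2 ^ (a + 1))
  rw [← add_mul] at hB
  have h1 := padicValNat_fibFact_mul_two_pow (d + k) a
  have h2 := padicValNat_fibFact_mul_two_pow k a
  have h3 := padicValNat_fibFact_mul_two_pow d a
  have hC := padicValNat_choose_two (d / 3 + 1) (k / 3)
  rw [Nat.factorial_succ, padicValNat.mul (by omega) (Nat.factorial_ne_zero _)] at hC
  have e : (d + k) / 3 = d / 3 + 1 + k / 3 := by omega
  have e' : (d + k) % 3 + 3 - k % 3 = d % 3 := by omega
  rw [e']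
  rw [e, add_mul (d / 3 + 1), add_mul (d / 3), one_mul] at h1
  rw [e, Nat.add_sub_cancel]
  omega

/-- The valuation in terms of `n`; with `n = l₁ 2^{b-a}` the residue of `n` modulo `3` absorbs the
parity of `b - a`. -/
theorem padicValNat_fibBinom_cases (a n k : ℕ) (ha : 0 < a) (hkn : k ≤ n) :
    (n % 3 = k % 3 ∨ k % 3 = 0 →
      padicValNat 2 (fibBinom (n * 2 ^ a) (k * 2 ^ a))
        = padicValNat 2 ((n / 3).choose (k / 3))) ∧
    (n % 3 = 0 ∧ k % 3 ≠ 0 →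
      padicValNat 2 (fibBinom (n * 2 ^ a) (k * 2 ^ a))
        = a + 2 + padicValNat 2 (n / 3 - k / 3) + padicValNat 2 ((n / 3).choose (k / 3))) ∧
    (n % 3 = 1 ∧ k % 3 = 2 →
      padicValNat 2 (fibBinom (n * 2 ^ a) (k * 2 ^ a))
        = (a + 1) / 2 + 1 + padicValNat 2 (n / 3 - k / 3)
          + padicValNat 2 ((n / 3).choose (k / 3))) ∧
    (n % 3 = 2 ∧ k % 3 = 1 →
      padicValNat 2 (fibBinom (n * 2 ^ a) (k * 2 ^ a))
        = (a + 2) / 2 + padicValNat 2 ((n / 3).choose (k / 3))) := by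
  obtain ⟨a, rfl⟩ : ∃ c, a = c + 1 := ⟨a - 1, by omega⟩
  have hle := padicValNat_fibBinom_of_le a n k hkn
  have hlt := padicValNat_fibBinom_of_lt a n k hkn
  have h0 := fibCorr_zero a
  have hc := fibCorr_closed a
  refine ⟨?_, ?_, ?_, ?_⟩
  · rintro (h | h)
    · rw [h, Nat.sub_self] at hle
      omega
    · rw [h, Nat.sub_zero] at hle
      omega
  · rintro ⟨h, h'⟩
    rw [h] at hlt
    obtain h2 | h2 : k % 3 = 1 ∨ k % 3 = 2 := by omega
    all_goals
      rw [h2] at hlt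
      norm_num at hlt
      omega
  · rintro ⟨h, h'⟩
    rw [h, h'] at hlt
    norm_num at hlt
    omega
  · rintro ⟨h, h'⟩
    rw [h, h'] at hle
    norm_num at hle
    omega

theorem mul_two_pow_mod_three (l c : ℕ) :
    l * 2 ^ c % 3 = if c % 2 = 0 then l % 3 else 2 * l % 3 := by
  induction c with
  | zero => simp
  | succ c ih =>
    rw [pow_succ, ← mul_assoc]
    split_ifs at ih ⊢ <;> omega

theorem two_adic_valuation_fibonomial_pow
    (a b l₁ l₂ : ℕ) (ha : 0 < a) (hb : 0 < b) (hl₁ : 0 < l₁) (hl₂ : 0 < l₂)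
    (hab : a ≤ b) (hgt : l₂ * 2 ^ a < l₁ * 2 ^ b)
    (m₂ k₂ : ℕ)
    (hm₂ : m₂ = l₁ * 2 ^ (b - a) / 3) (hk₂ : k₂ = l₂ / 3) :
    (a % 2 = b % 2 →
      (l₁ % 3 = l₂ % 3 ∨ l₂ % 3 = 0 →
        padicValNat 2 (fibBinom (l₁ * 2 ^ b) (l₂ * 2 ^ a))
          = padicValNat 2 (Nat.choose m₂ k₂)) ∧
      (l₁ % 3 = 0 ∧ l₂ % 3 ≠ 0 →
        padicValNat 2 (fibBinom (l₁ * 2 ^ b) (l₂ * 2 ^ a))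
          = a + 2 + padicValNat 2 (m₂ - k₂) + padicValNat 2 (Nat.choose m₂ k₂)) ∧
      (l₁ % 3 = 1 ∧ l₂ % 3 = 2 →
        padicValNat 2 (fibBinom (l₁ * 2 ^ b) (l₂ * 2 ^ a))
          = (a + 1) / 2 + 1 + padicValNat 2 (m₂ - k₂)
            + padicValNat 2 (Nat.choose m₂ k₂)) ∧
      (l₁ % 3 = 2 ∧ l₂ % 3 = 1 →
        padicValNat 2 (fibBinom (l₁ * 2 ^ b) (l₂ * 2 ^ a))
          = (a + 2) / 2 + padicValNat 2 (Nat.choose m₂ k₂))) ∧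
    (a % 2 ≠ b % 2 →
      ((l₁ + l₂) % 3 = 0 ∨ l₂ % 3 = 0 →
        padicValNat 2 (fibBinom (l₁ * 2 ^ b) (l₂ * 2 ^ a))
          = padicValNat 2 (Nat.choose m₂ k₂)) ∧
      (l₁ % 3 = 0 ∧ l₂ % 3 ≠ 0 →
        padicValNat 2 (fibBinom (l₁ * 2 ^ b) (l₂ * 2 ^ a))
          = a + 2 + padicValNat 2 (m₂ - k₂) + padicValNat 2 (Nat.choose m₂ k₂)) ∧
      (l₁ % 3 = 1 ∧ l₂ % 3 = 1 →
        padicValNat 2 (fibBinom (l₁ * 2 ^ b) (l₂ * 2 ^ a))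
          = (a + 2) / 2 + padicValNat 2 (Nat.choose m₂ k₂)) ∧
      (l₁ % 3 = 2 ∧ l₂ % 3 = 2 →
        padicValNat 2 (fibBinom (l₁ * 2 ^ b) (l₂ * 2 ^ a))
          = (a + 1) / 2 + 1 + padicValNat 2 (m₂ - k₂)
            + padicValNat 2 (Nat.choose m₂ k₂))) := by
  subst hm₂ hk₂
  obtain ⟨c, rfl⟩ := Nat.exists_eq_add_of_le hab
  have e : l₁ * 2 ^ (a + c) = l₁ * 2 ^ c * 2 ^ a := by rw [pow_add]; ring
  rw [e] at hgt ⊢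
  rw [Nat.add_sub_cancel_left]
  have hlt : l₂ < l₁ * 2 ^ c := lt_of_mul_lt_mul_right hgt (Nat.zero_le _)
  have hmod := mul_two_pow_mod_three l₁ c
  obtain ⟨h1, h2, h3, h4⟩ := padicValNat_fibBinom_cases a (l₁ * 2 ^ c) l₂ ha hlt.le
  constructor
  · intro hpar
    rw [if_pos (by omega)] at hmod
    rw [hmod] at h1 h2 h3 h4
    exact ⟨h1, h2, h3, h4⟩
  · intro hpar
    rw [if_neg (by omega)] at hmod
    exact ⟨fun h => h1 (by omega), fun h => h2 (by omega), fun h => h4 (by omega),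
      fun h => h3 (by omega)⟩
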